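/- Let b and m be positive integers. If m divides b + 1 and cosocle(m) > rad(b), then for each positive odd integer k, the triple (1, b^k, b^k + 1) is an abc triple. -/

import Mathlib

open scoped Classical

/-- The radical of a natural number: the product of its distinct prime factors. -/
def rad (n : ℕ) : ℕ := ∏ p ∈ n.primeFactors, p

/-- The cosocle of a natural number: `n / rad n`. -/
def cosocle (n : ℕ) : ℕ := n / rad n

/-- `(a, b, c)` is an abc triple: `a, b, c` are relatively prime positive integers with
`a + b = c` and `rad (a*b*c) < c`. -/
def IsABCTriple (a b c : ℕ) : Prop :=
  0 < a ∧ 0 < b ∧ 0 < c ∧ a + b = c ∧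
    Nat.Coprime a b ∧ Nat.Coprime a c ∧ Nat.Coprime b c ∧ rad (a * b * c) < c

/-!
Since `n` and `n + 1` are coprime, `rad (n * (n + 1)) = rad n * rad (n + 1)`, so `(1, n, n + 1)` is
an abc triple exactly when `rad n < cosocle (n + 1)`. Passing from `n = b` to `n = b ^ k` leaves the
left-hand side unchanged, while the right-hand side can only grow: the cosocle is monotone for
divisibility, and `m ∣ b + 1 ∣ b ^ k + 1` for odd `k`.
-/

open UniqueFactorizationMonoid

theorem rad_eq_radical (n : ℕ) : rad n = radical n :=
  Nat.radical_eq_prod_primeFactors.symm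

theorem rad_pos (n : ℕ) : 0 < rad n :=
  rad_eq_radical n ▸ Nat.radical_pos n

theorem rad_dvd_self (n : ℕ) : rad n ∣ n :=
  rad_eq_radical n ▸ radical_dvd_self

theorem rad_pow (n : ℕ) {k : ℕ} (hk : k ≠ 0) : rad (n ^ k) = rad n := by
  simp only [rad_eq_radical, radical_pow n hk]

theorem rad_mul_dvd (a b : ℕ) : rad (a * b) ∣ rad a * rad b := by
  simpa only [rad_eq_radical] using radical_mul_dvd

theorem rad_mul_of_coprime {a b : ℕ} (h : a.Coprime b) : rad (a * b) = rad a * rad b := by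
  simpa only [rad_eq_radical] using radical_mul (Nat.coprime_iff_isRelPrime.mp h)

theorem cosocle_mul_rad (n : ℕ) : cosocle n * rad n = n :=
  Nat.div_mul_cancel (rad_dvd_self n)

theorem cosocle_pos {n : ℕ} (hn : 0 < n) : 0 < cosocle n :=
  Nat.div_pos (Nat.le_of_dvd hn (rad_dvd_self n)) (rad_pos n)

theorem cosocle_dvd_cosocle {m n : ℕ} (h : m ∣ n) : cosocle m ∣ cosocle n := by
  obtain ⟨t, rfl⟩ := h
  have rad_dvd : rad (m * t) ∣ rad m * t :=
    (rad_mul_dvd m t).trans (mul_dvd_mul_left _ (rad_dvd_self t))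
  refine Nat.dvd_div_of_mul_dvd ?_
  calc rad (m * t) * cosocle m
    _ ∣ rad m * t * cosocle m := mul_dvd_mul_right rad_dvd _
    _ = cosocle m * rad m * t := by ring
    _ = m * t := by rw [cosocle_mul_rad]

theorem rad_mul_succ_lt_iff (n : ℕ) :
    rad (n * (n + 1)) < n + 1 ↔ rad n < cosocle (n + 1) := by
  have rad_mul : rad (n * (n + 1)) = rad n * rad (n + 1) :=
    rad_mul_of_coprime (Nat.coprime_self_add_right.mpr (Nat.coprime_one_right n))
  calc rad (n * (n + 1)) < n + 1
    _ ↔ rad n * rad (n + 1) < cosocle (n + 1) * rad (n + 1) := by rw [rad_mul, cosocle_mul_rad]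
    _ ↔ rad n < cosocle (n + 1) := Nat.mul_lt_mul_right (rad_pos (n + 1))

theorem isABCTriple_one_iff {n : ℕ} (hn : 0 < n) :
    IsABCTriple 1 n (n + 1) ↔ rad n < cosocle (n + 1) := by
  rw [← rad_mul_succ_lt_iff]
  simp [IsABCTriple, hn, add_comm 1 n]

theorem stmt_1 (b m : ℕ) (hb : 0 < b) (hm : 0 < m) (hdvd : m ∣ b + 1)
    (hcos : rad b < cosocle m) :
    ∀ k : ℕ, 0 < k → Odd k → IsABCTriple 1 (b ^ k) (b ^ k + 1) := by
  intro k hk hodd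
  have hm_dvd : m ∣ b ^ k + 1 :=
    hdvd.trans (by simpa only [one_pow] using hodd.nat_add_dvd_pow_add_pow b 1)
  rw [isABCTriple_one_iff (pow_pos hb k)]
  calc rad (b ^ k)
    _ = rad b := rad_pow b hk.ne'
    _ < cosocle m := hcos
    _ ≤ cosocle (b ^ k + 1) :=
      Nat.le_of_dvd (cosocle_pos (Nat.succ_pos _)) (cosocle_dvd_cosocle hm_dvd)
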